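/- Let G be a graph on vertices {1,…,t} with edge set E, and let U ∈ R^{t×n} have nonnegative entries with each row summing to 1, with u_i denoting the i-th row of U. Then SDD^G_+(U) := U^T (SDD^G_+) U equals the conic hull of all matrices vv^T with v ∈ seg(G,U) := ∪_{{i,j}∈E} [u_i, u_j]. -/

import Mathlib

open Matrix Set

noncomputable section

/-- The embedding `ι_{ij} : S² → Sⁿ` placing a 2×2 symmetric matrix into
rows/columns `i, j` with zeros elsewhere. -/
def iota {n : ℕ} (i j : Fin n) (S : Matrix (Fin 2) (Fin 2) ℝ) :
    Matrix (Fin n) (Fin n) ℝ :=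
  Matrix.of fun r s =>
    (if r = i ∧ s = i then S 0 0 else 0) +
    (if r = i ∧ s = j then S 0 1 else 0) +
    (if r = j ∧ s = i then S 1 0 else 0) +
    (if r = j ∧ s = j then S 1 1 else 0)

/-- The cone `SDDⁿ = Σ_{i<j} ι_{ij}(S²₊)` of scaled diagonally dominant matrices. -/
def SDD (n : ℕ) : Set (Matrix (Fin n) (Fin n) ℝ) :=
  {X | ∃ S : Fin n → Fin n → Matrix (Fin 2) (Fin 2) ℝ,
    (∀ i j : Fin n, (S i j).PosSemidef) ∧
    X = ∑ i : Fin n, ∑ j : Fin n, if i < j then iota i j (S i j) else 0}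

/-- `Nⁿ`: symmetric entrywise nonnegative matrices. -/
def NonnegMat (n : ℕ) : Set (Matrix (Fin n) (Fin n) ℝ) :=
  {X | X.IsSymm ∧ ∀ i j, 0 ≤ X i j}

/-- Dual cone within the space of symmetric matrices, w.r.t. the trace inner product. -/
def dualCone {n : ℕ} (C : Set (Matrix (Fin n) (Fin n) ℝ)) :
    Set (Matrix (Fin n) (Fin n) ℝ) :=
  {Y | Y.IsSymm ∧ ∀ X ∈ C, 0 ≤ (X * Y).trace}

open scoped Classical in
/-- `SDD^G = Σ_{{i,j}∈E} ι_{ij}(S²₊)` (equal to `{0}` if `E = ∅`). -/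
def SDDG {t : ℕ} (G : SimpleGraph (Fin t)) : Set (Matrix (Fin t) (Fin t) ℝ) :=
  {X | ∃ S : Fin t → Fin t → Matrix (Fin 2) (Fin 2) ℝ,
    (∀ i j : Fin t, (S i j).PosSemidef) ∧
    X = ∑ i : Fin t, ∑ j : Fin t, if i < j ∧ G.Adj i j then iota i j (S i j) else 0}

/-- `SDD^G₊ = SDD^G ∩ Nᵗ`. -/
def SDDGplus {t : ℕ} (G : SimpleGraph (Fin t)) : Set (Matrix (Fin t) (Fin t) ℝ) :=
  SDDG G ∩ NonnegMat t

/-- `SDD^G₊(U) = Uᵀ (SDD^G₊) U`. -/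
def SDDGplusU {t n : ℕ} (G : SimpleGraph (Fin t)) (U : Matrix (Fin t) (Fin n) ℝ) :
    Set (Matrix (Fin n) (Fin n) ℝ) :=
  {X | ∃ Y ∈ SDDGplus G, X = Uᵀ * Y * U}

/-- `seg(G,U) = ∪_{{i,j}∈E} [uᵢ, uⱼ]`. -/
def seg {t n : ℕ} (G : SimpleGraph (Fin t)) (U : Matrix (Fin t) (Fin n) ℝ) :
    Set (Fin n → ℝ) :=
  {v | ∃ i j : Fin t, G.Adj i j ∧ v ∈ segment ℝ (U i) (U j)}

/-- The conic hull: finite nonnegative combinations of elements of `s`. -/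
def conicHull {α : Type*} [AddCommMonoid α] [Module ℝ α] (s : Set α) : Set α :=
  {x | ∃ (N : ℕ) (c : Fin N → ℝ) (v : Fin N → α),
    (∀ k, 0 ≤ c k) ∧ (∀ k, v k ∈ s) ∧ x = ∑ k, c k • v k}

theorem zero_mem_conicHull {α : Type*} [AddCommMonoid α] [Module ℝ α] (s : Set α) :
    (0 : α) ∈ conicHull s :=
  ⟨0, Fin.elim0, Fin.elim0, fun k => k.elim0, fun k => k.elim0, by simp⟩

theorem smul_mem_conicHull_of_mem {α : Type*} [AddCommMonoid α] [Module ℝ α] {s : Set α}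
    {c : ℝ} (hc : 0 ≤ c) {x : α} (hx : x ∈ s) : c • x ∈ conicHull s :=
  ⟨1, fun _ => c, fun _ => x, fun _ => hc, fun _ => hx, by simp⟩

theorem add_mem_conicHull {α : Type*} [AddCommMonoid α] [Module ℝ α] {s : Set α} {x y : α}
    (hx : x ∈ conicHull s) (hy : y ∈ conicHull s) : x + y ∈ conicHull s := by
  obtain ⟨N, c, v, hc, hv, rfl⟩ := hx
  obtain ⟨M, d, w, hd, hw, rfl⟩ := hy
  refine ⟨N + M, Fin.append c d, Fin.append v w, fun k => ?_, fun k => ?_, ?_⟩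
  · refine Fin.addCases (fun k => ?_) (fun k => ?_) k
    · simpa using hc k
    · simpa using hd k
  · refine Fin.addCases (fun k => ?_) (fun k => ?_) k
    · simpa using hv k
    · simpa using hw k
  · simp [Fin.sum_univ_add]

theorem sum_mem_conicHull {α ι : Type*} [AddCommMonoid α] [Module ℝ α] {s : Set α}
    (F : Finset ι) {f : ι → α} (hf : ∀ i ∈ F, f i ∈ conicHull s) :
    ∑ i ∈ F, f i ∈ conicHull s :=
  Finset.sum_induction f (· ∈ conicHull s) (fun _ _ => add_mem_conicHull)
    (zero_mem_conicHull s) hf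

theorem iota_zero {t : ℕ} (i j : Fin t) : iota i j 0 = 0 := by
  ext r s
  simp [iota]

theorem iota_add {t : ℕ} (i j : Fin t) (S T : Matrix (Fin 2) (Fin 2) ℝ) :
    iota i j (S + T) = iota i j S + iota i j T := by
  ext r s
  simp only [iota, Matrix.of_apply, Matrix.add_apply]
  split_ifs <;> ring

theorem iota_smul {t : ℕ} (i j : Fin t) (c : ℝ) (S : Matrix (Fin 2) (Fin 2) ℝ) :
    iota i j (c • S) = c • iota i j S := by
  ext r s
  simp only [iota, Matrix.of_apply, Matrix.smul_apply, smul_eq_mul]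
  split_ifs <;> ring

theorem iota_vecMulVec {t : ℕ} (i j : Fin t) (w : Fin 2 → ℝ) :
    iota i j (vecMulVec w w) =
      vecMulVec (Pi.single i (w 0) + Pi.single j (w 1))
        (Pi.single i (w 0) + Pi.single j (w 1)) := by
  ext r s
  simp only [iota, Matrix.of_apply, vecMulVec_apply, Pi.add_apply, Pi.single_apply]
  simp only [ite_and]
  split_ifs <;> ring

theorem transpose_mul_iota_vecMulVec_mul {t n : ℕ} (U : Matrix (Fin t) (Fin n) ℝ)
    (i j : Fin t) (w : Fin 2 → ℝ) :
    Uᵀ * iota i j (vecMulVec w w) * U =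
      vecMulVec (w 0 • U i + w 1 • U j) (w 0 • U i + w 1 • U j) := by
  have h : (Pi.single i (w 0) + Pi.single j (w 1)) ᵥ* U = w 0 • U i + w 1 • U j := by
    rw [Matrix.add_vecMul, Matrix.single_vecMul, Matrix.single_vecMul]
    rfl
  rw [iota_vecMulVec, Matrix.mul_vecMulVec, Matrix.vecMulVec_mul, Matrix.mulVec_transpose, h]

/-- A nonnegative positive semidefinite `2 × 2` matrix is completely positive. -/
theorem exists_eq_vecMulVec_add_vecMulVec {S : Matrix (Fin 2) (Fin 2) ℝ} (hS : S.PosSemidef)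
    (h01 : 0 ≤ S 0 1) :
    ∃ w z : Fin 2 → ℝ, 0 ≤ w ∧ 0 ≤ z ∧ S = vecMulVec w w + vecMulVec z z := by
  have ha : 0 ≤ S 0 0 := hS.diag_nonneg
  have hd : 0 ≤ S 1 1 := hS.diag_nonneg
  have hsymm : S 1 0 = S 0 1 := by simpa using hS.isHermitian.apply 0 1
  have hdet : 0 ≤ S 0 0 * S 1 1 - S 0 1 * S 0 1 := by
    have := hS.det_nonneg
    rwa [Matrix.det_fin_two, hsymm] at this
  rcases ha.eq_or_lt with h0 | hpos
  · have hb : S 0 1 = 0 := by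
      rw [← h0] at hdet
      nlinarith
    refine ⟨![0, √(S 1 1)], 0, ?_, le_rfl, ?_⟩
    · intro k
      fin_cases k <;> simp
    · ext k l
      fin_cases k <;> fin_cases l <;> simp [← h0, hb, hsymm, hd]
  · have hq : 0 ≤ S 1 1 - S 0 1 * S 0 1 / S 0 0 := by
      rw [sub_nonneg, div_le_iff₀ hpos]
      linarith
    have hs : √(S 0 0) ≠ 0 := (Real.sqrt_pos.2 hpos).ne'
    have hss : √(S 0 0) * √(S 0 0) = S 0 0 := Real.mul_self_sqrt ha
    refine ⟨![√(S 0 0), S 0 1 / √(S 0 0)], ![0, √(S 1 1 - S 0 1 * S 0 1 / S 0 0)], ?_, ?_, ?_⟩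
    · intro k
      fin_cases k
      · simp
      · simpa using div_nonneg h01 (Real.sqrt_nonneg _)
    · intro k
      fin_cases k <;> simp
    · have h11 : S 0 1 / √(S 0 0) * (S 0 1 / √(S 0 0)) = S 0 1 * S 0 1 / S 0 0 := by
        rw [div_mul_div_comm, hss]
      ext k l
      fin_cases k <;> fin_cases l <;>
        simp [hsymm, ha, hq, h11, mul_div_cancel₀, hs]

theorem vecMulVec_mem_conicHull_seg {t n : ℕ} {G : SimpleGraph (Fin t)}
    (U : Matrix (Fin t) (Fin n) ℝ) {i j : Fin t} (hij : G.Adj i j) {a b : ℝ}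
    (ha : 0 ≤ a) (hb : 0 ≤ b) :
    vecMulVec (a • U i + b • U j) (a • U i + b • U j) ∈
      conicHull {M | ∃ v ∈ seg G U, M = vecMulVec v v} := by
  rcases (add_nonneg ha hb).eq_or_lt with h0 | hpos
  · obtain rfl : a = 0 := by linarith
    obtain rfl : b = 0 := by linarith
    simpa using zero_mem_conicHull _
  · have hv : a • U i + b • U j =
        (a + b) • ((a / (a + b)) • U i + (b / (a + b)) • U j) := by
      rw [smul_add, smul_smul, smul_smul, mul_div_cancel₀ _ hpos.ne',
        mul_div_cancel₀ _ hpos.ne']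
    rw [hv, Matrix.smul_vecMulVec, Matrix.vecMulVec_smul, smul_smul]
    refine smul_mem_conicHull_of_mem (mul_self_nonneg _) ⟨_, ⟨i, j, hij, ?_⟩, rfl⟩
    exact ⟨_, _, div_nonneg ha hpos.le, div_nonneg hb hpos.le,
      by rw [← add_div, div_self hpos.ne'], rfl⟩

open scoped Classical in
theorem sum_iota_apply_of_adj {t : ℕ} {G : SimpleGraph (Fin t)}
    (S : Fin t → Fin t → Matrix (Fin 2) (Fin 2) ℝ) {p q : Fin t} (hpq : p < q)
    (hG : G.Adj p q) :
    (∑ i : Fin t, ∑ j : Fin t, if i < j ∧ G.Adj i j then iota i j (S i j) else 0) p q =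
      S p q 0 1 := by
  have hterm : ∀ i j : Fin t,
      (if i < j ∧ G.Adj i j then iota i j (S i j) else 0) p q =
        if i = p then (if j = q then S p q 0 1 else 0) else 0 := by
    intro i j
    by_cases hi : i = p
    · by_cases hj : j = q
      · subst hi hj
        simp [iota, hpq, hG, hpq.ne, hpq.ne']
      · subst hi
        by_cases h : i < j ∧ G.Adj i j
        · simp [h, iota, hj, Ne.symm hj, hpq.ne', h.1.ne]
        · simp [h, hj]
    · by_cases h : i < j ∧ G.Adj i j
      · have h₁ : ¬(p = j ∧ q = i) := by
          rintro ⟨rfl, rfl⟩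
          exact lt_asymm hpq h.1
        have h₂ : ¬(p = j ∧ q = j) := by
          rintro ⟨rfl, h₂⟩
          exact hpq.ne' h₂
        simp [h, iota, hi, Ne.symm hi, h₁, h₂]
      · simp [h, hi]
  simp only [Matrix.sum_apply, hterm]
  simp

theorem zero_mem_SDDGplus {t : ℕ} (G : SimpleGraph (Fin t)) : 0 ∈ SDDGplus G :=
  ⟨⟨fun _ _ => 0, fun _ _ => Matrix.PosSemidef.zero, by simp [iota_zero]⟩,
    Matrix.isSymm_zero, fun _ _ => le_rfl⟩

theorem add_mem_SDDGplus {t : ℕ} {G : SimpleGraph (Fin t)} {X Y : Matrix (Fin t) (Fin t) ℝ}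
    (hX : X ∈ SDDGplus G) (hY : Y ∈ SDDGplus G) : X + Y ∈ SDDGplus G := by
  obtain ⟨⟨S, hS, hXS⟩, hXsymm, hX0⟩ := hX
  obtain ⟨⟨T, hT, hYT⟩, hYsymm, hY0⟩ := hY
  refine ⟨⟨fun i j => S i j + T i j, fun i j => (hS i j).add (hT i j), ?_⟩,
    hXsymm.add hYsymm, fun i j => add_nonneg (hX0 i j) (hY0 i j)⟩
  rw [hXS, hYT]
  simp only [← Finset.sum_add_distrib, iota_add]
  refine Finset.sum_congr rfl fun i _ => Finset.sum_congr rfl fun j _ => ?_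
  split_ifs <;> simp

theorem smul_mem_SDDGplus {t : ℕ} {G : SimpleGraph (Fin t)} {X : Matrix (Fin t) (Fin t) ℝ}
    {c : ℝ} (hc : 0 ≤ c) (hX : X ∈ SDDGplus G) : c • X ∈ SDDGplus G := by
  obtain ⟨⟨S, hS, hXS⟩, hXsymm, hX0⟩ := hX
  refine ⟨⟨fun i j => c • S i j, fun i j => (hS i j).smul hc, ?_⟩,
    hXsymm.smul c, fun i j => mul_nonneg hc (hX0 i j)⟩
  rw [hXS]
  simp only [Finset.smul_sum, iota_smul, smul_ite, smul_zero]

theorem iota_vecMulVec_mem_SDDGplus {t : ℕ} {G : SimpleGraph (Fin t)} {i j : Fin t}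
    (hlt : i < j) (hij : G.Adj i j) {w : Fin 2 → ℝ} (hw : 0 ≤ w) :
    iota i j (vecMulVec w w) ∈ SDDGplus G := by
  classical
  refine ⟨⟨fun p q => if p = i ∧ q = j then vecMulVec w w else 0, fun p q => ?_, ?_⟩, ?_, ?_⟩
  · dsimp only
    split_ifs
    · simpa using Matrix.posSemidef_vecMulVec_self_star w
    · exact Matrix.PosSemidef.zero
  · rw [Finset.sum_eq_single i, Finset.sum_eq_single j]
    · simp [hlt, hij]
    · intro q _ hq
      simp [hq, iota_zero]
    · simp
    · intro p _ hp
      simp [hp, iota_zero]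
    · simp
  · rw [iota_vecMulVec]
    exact Matrix.transpose_vecMulVec _ _
  · intro p q
    have h : 0 ≤ (Pi.single i (w 0) + Pi.single j (w 1) : Fin t → ℝ) :=
      add_nonneg (Pi.single_nonneg.2 (hw 0)) (Pi.single_nonneg.2 (hw 1))
    rw [iota_vecMulVec]
    exact mul_nonneg (h p) (h q)

theorem zero_mem_SDDGplusU {t n : ℕ} (G : SimpleGraph (Fin t)) (U : Matrix (Fin t) (Fin n) ℝ) :
    0 ∈ SDDGplusU G U :=
  ⟨0, zero_mem_SDDGplus G, by simp⟩

theorem add_mem_SDDGplusU {t n : ℕ} {G : SimpleGraph (Fin t)} {U : Matrix (Fin t) (Fin n) ℝ}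
    {X Y : Matrix (Fin n) (Fin n) ℝ} (hX : X ∈ SDDGplusU G U) (hY : Y ∈ SDDGplusU G U) :
    X + Y ∈ SDDGplusU G U := by
  obtain ⟨A, hA, rfl⟩ := hX
  obtain ⟨B, hB, rfl⟩ := hY
  exact ⟨A + B, add_mem_SDDGplus hA hB, by rw [Matrix.mul_add, Matrix.add_mul]⟩

theorem smul_mem_SDDGplusU {t n : ℕ} {G : SimpleGraph (Fin t)} {U : Matrix (Fin t) (Fin n) ℝ}
    {X : Matrix (Fin n) (Fin n) ℝ} {c : ℝ} (hc : 0 ≤ c) (hX : X ∈ SDDGplusU G U) :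
    c • X ∈ SDDGplusU G U := by
  obtain ⟨A, hA, rfl⟩ := hX
  exact ⟨c • A, smul_mem_SDDGplus hc hA, by rw [Matrix.mul_smul, Matrix.smul_mul]⟩

theorem vecMulVec_mem_SDDGplusU {t n : ℕ} {G : SimpleGraph (Fin t)}
    {U : Matrix (Fin t) (Fin n) ℝ} {v : Fin n → ℝ} (hv : v ∈ seg G U) :
    vecMulVec v v ∈ SDDGplusU G U := by
  obtain ⟨i, j, hij, a, b, ha, hb, -, rfl⟩ := hv
  rcases lt_or_gt_of_ne hij.ne with hlt | hlt
  · have hw : (0 : Fin 2 → ℝ) ≤ ![a, b] := by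
      intro k
      fin_cases k <;> simp [ha, hb]
    exact ⟨_, iota_vecMulVec_mem_SDDGplus hlt hij hw,
      (transpose_mul_iota_vecMulVec_mul U i j ![a, b]).symm⟩
  · have hw : (0 : Fin 2 → ℝ) ≤ ![b, a] := by
      intro k
      fin_cases k <;> simp [ha, hb]
    exact ⟨_, iota_vecMulVec_mem_SDDGplus hlt hij.symm hw,
      by rw [add_comm]; exact (transpose_mul_iota_vecMulVec_mul U j i ![b, a]).symm⟩

theorem transpose_mul_iota_mul_mem_conicHull {t n : ℕ} {G : SimpleGraph (Fin t)}
    (U : Matrix (Fin t) (Fin n) ℝ) {i j : Fin t} (hij : G.Adj i j)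
    {S : Matrix (Fin 2) (Fin 2) ℝ} (hS : S.PosSemidef) (h01 : 0 ≤ S 0 1) :
    Uᵀ * iota i j S * U ∈ conicHull {M | ∃ v ∈ seg G U, M = vecMulVec v v} := by
  obtain ⟨w, z, hw, hz, rfl⟩ := exists_eq_vecMulVec_add_vecMulVec hS h01
  rw [iota_add, Matrix.mul_add, Matrix.add_mul, transpose_mul_iota_vecMulVec_mul,
    transpose_mul_iota_vecMulVec_mul]
  exact add_mem_conicHull (vecMulVec_mem_conicHull_seg U hij (hw 0) (hw 1))
    (vecMulVec_mem_conicHull_seg U hij (hz 0) (hz 1))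

/-- `SDD^G₊(U)` is the conic hull of all `vvᵀ` with `v ∈ seg(G,U)`. -/
theorem SDDGplusU_eq_conicHull {t n : ℕ} (G : SimpleGraph (Fin t))
    (U : Matrix (Fin t) (Fin n) ℝ)
    (hU : ∀ i j, 0 ≤ U i j) (hrow : ∀ i, ∑ j, U i j = 1) :
    SDDGplusU G U = conicHull {M | ∃ v ∈ seg G U, M = vecMulVec v v} := by
  apply Set.Subset.antisymm
  · rintro _ ⟨Y, ⟨⟨S, hS, hY⟩, -, hY0⟩, rfl⟩
    have hoff : ∀ i j, i < j → G.Adj i j → 0 ≤ S i j 0 1 := by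
      intro i j hlt hij
      rw [← sum_iota_apply_of_adj S hlt hij, ← hY]
      exact hY0 i j
    rw [hY]
    simp only [Matrix.mul_sum, Matrix.sum_mul]
    refine sum_mem_conicHull _ fun i _ => sum_mem_conicHull _ fun j _ => ?_
    split_ifs with h
    · exact transpose_mul_iota_mul_mem_conicHull U h.2 (hS i j) (hoff i j h.1 h.2)
    · simpa using zero_mem_conicHull _
  · rintro _ ⟨N, c, M, hc, hM, rfl⟩
    refine Finset.sum_induction _ (· ∈ SDDGplusU G U) (fun _ _ => add_mem_SDDGplusU)
      (zero_mem_SDDGplusU G U) fun k _ => ?_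
    obtain ⟨v, hv, hMv⟩ := hM k
    rw [hMv]
    exact smul_mem_SDDGplusU (hc k) (vecMulVec_mem_SDDGplusU hv)

end
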